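/- (Asymptotic Completeness of Surface Reduction) In Λ⊕^cbv with observations 𝒱_∼ (β_v-equivalence classes of values), a multidistribution 𝔪 has a reduction sequence converging to 𝝁 if and only if it has a surface reduction sequence converging to 𝝁. -/

import Mathlib

open scoped NNReal ENNReal

/-- A (raw) multidistribution on `X`: a finite multiset of weighted elements. -/
abbrev MDist (X : Type) := Multiset (ℝ≥0 × X)

namespace MDist

/-- Scalar multiplication of a multidistribution. -/
def scale {X : Type} (p : ℝ≥0) (m : MDist X) : MDist X :=
  m.map fun q => (p * q.1, q.2)

/-- The singleton multidistribution `[1 M]`. -/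
def single {X : Type} (M : X) : MDist X := {(1, M)}

/-- A multidistribution is proper when every weight lies in `(0,1]` and the
weights sum to at most `1`. -/
def Proper {X : Type} (m : MDist X) : Prop :=
  (∀ q ∈ m, 0 < q.1 ∧ q.1 ≤ 1) ∧ (m.map Prod.fst).sum ≤ 1

/-- The probability that the distribution associated to a multidistribution
assigns to an event `A`. -/
noncomputable def mass {X : Type} (m : MDist X) (A : Set X) : ℝ≥0∞ :=
  (m.map fun q => A.indicator (fun _ => (q.1 : ℝ≥0∞)) q.2).sum

end MDist

/-- One component of the lifting: either keep the term or perform a step. -/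
def LiftTerm {X : Type} (r : X → MDist X → Prop) (M : X) (m : MDist X) : Prop :=
  m = MDist.single M ∨ r M m

/-- The lifting of a relation `r ⊆ X × MDist X` to a binary relation on
multidistributions. -/
inductive Lift {X : Type} (r : X → MDist X → Prop) : MDist X → MDist X → Prop
  | nil : Lift r 0 0
  | cons {p : ℝ≥0} {M : X} {m s t : MDist X} :
      LiftTerm r M m → Lift r s t → Lift r ((p, M) ::ₘ s) (MDist.scale p m + t)
/-- Terms of `Λ⊕` (de Bruijn representation). -/
inductive Term : Type
  | var : ℕ → Term
  | lam : Term → Term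
  | app : Term → Term → Term
  | choice : Term → Term → Term
deriving DecidableEq

namespace Term

/-- Shifting of de Bruijn indices above a cutoff. -/
def liftAux (c : ℕ) : Term → Term
  | var k => if k < c then var k else var (k + 1)
  | lam M => lam (liftAux (c + 1) M)
  | app M N => app (liftAux c M) (liftAux c N)
  | choice M N => choice (liftAux c M) (liftAux c N)

/-- Capture-avoiding substitution `M[N/j]`. -/
def subst : Term → ℕ → Term → Term
  | var k, j, N => if k = j then N else if j < k then var (k - 1) else var k
  | lam M, j, N => lam (subst M (j + 1) (liftAux 0 N))
  | app M P, j, N => app (subst M j N) (subst P j N)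
  | choice M P, j, N => choice (subst M j N) (subst P j N)

/-- Values: variables and abstractions. -/
inductive IsValue : Term → Prop
  | var (n : ℕ) : IsValue (var n)
  | lam (M : Term) : IsValue (lam M)

/-- `β_v`-reduction, closed under arbitrary contexts. -/
inductive BetaStep : Term → Term → Prop
  | beta {M V : Term} : IsValue V → BetaStep (app (lam M) V) (subst M 0 V)
  | appL {M M' N : Term} : BetaStep M M' → BetaStep (app M N) (app M' N)
  | appR {M N N' : Term} : BetaStep N N' → BetaStep (app M N) (app M N')
  | lam {M M' : Term} : BetaStep M M' → BetaStep (lam M) (lam M')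
  | chL {M M' N : Term} : BetaStep M M' → BetaStep (choice M N) (choice M' N)
  | chR {M N N' : Term} : BetaStep N N' → BetaStep (choice M N) (choice M N')

/-- Surface `β_v`-reduction: closure under surface contexts `S ::= □ | MS | SM`. -/
inductive SurfBetaStep : Term → Term → Prop
  | beta {M V : Term} : IsValue V → SurfBetaStep (app (lam M) V) (subst M 0 V)
  | appL {M M' N : Term} : SurfBetaStep M M' → SurfBetaStep (app M N) (app M' N)
  | appR {M N N' : Term} : SurfBetaStep N N' → SurfBetaStep (app M N) (app M N')

/-- `PlusStep M A B` holds when `M = S(P ⊕ Q)`, `A = S(P)`, `B = S(Q)` for a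
surface context `S ::= □ | MS | SM`. -/
inductive PlusStep : Term → Term → Term → Prop
  | choice {M N : Term} : PlusStep (choice M N) M N
  | appL {M A B N : Term} : PlusStep M A B → PlusStep (app M N) (app A N) (app B N)
  | appR {M N A B : Term} : PlusStep N A B → PlusStep (app M N) (app M A) (app M B)

end Term

open Term

/-- The reduction `→_{β_v} ⊆ Λ⊕ × MDST(Λ⊕)`. -/
def betaRed (M : Term) (m : MDist Term) : Prop :=
  ∃ N, BetaStep M N ∧ m = MDist.single N

/-- The probabilistic reduction `→_⊕ ⊆ Λ⊕ × MDST(Λ⊕)`. -/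
def plusRed (M : Term) (m : MDist Term) : Prop :=
  ∃ A B, PlusStep M A B ∧ m = {((1 : ℝ≥0) / 2, A), ((1 : ℝ≥0) / 2, B)}

/-- The full reduction `→ = →_{β_v} ∪ →_⊕`. -/
def red (M : Term) (m : MDist Term) : Prop := betaRed M m ∨ plusRed M m

/-- Surface reduction `→ₛ`: β_v and ⊕ rules closed under surface contexts. -/
def surfRed (M : Term) (m : MDist Term) : Prop :=
  (∃ N, SurfBetaStep M N ∧ m = MDist.single N) ∨ plusRed M m

/-- A step is deep when it is not a surface step. -/
def deepRed (M : Term) (m : MDist Term) : Prop := red M m ∧ ¬ surfRed M m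

/-- `β_v`-equivalence: reflexive-symmetric-transitive closure of β_v-reduction. -/
def BetaEq : Term → Term → Prop := Relation.EqvGen BetaStep

/-- The event `𝐕`: values β_v-equivalent to the value `V`. -/
def VClass (V : Term) : Set Term := {W | IsValue W ∧ BetaEq W V}

/-- Convergence of a sequence of multidistributions to a limit assignment on
the events `𝒱_∼`. -/
def ConvergesV (ms : ℕ → MDist Term) (ρ : Term → ℝ≥0∞) : Prop :=
  ∀ V : Term, IsValue V → ρ V = ⨆ n, MDist.mass (ms n) (VClass V)

/-!
An arbitrary reduction sequence is simulated by surface reductions while the simulating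
multidistribution stays related by deep reduction to the simulated one: if `𝔯 ⇒_d* 𝔪 ⇒ 𝔫`, then
`𝔯 ⇒ₛ* 𝔯' ⇒_d* 𝔫`. Deep reduction preserves both being a value and `β_v`-equivalence, so the two
sequences observe the same masses at every stage. The simulating sequence takes several surface
steps at a time; inserting the intermediate stages does not change the limit, because values are
surface normal and the mass of an event therefore never decreases along surface reduction.
-/

section Sequences

open Relation

variable {α β : Type*} {r : α → α → Prop} {q : β → β → Prop} {S : β → α → Prop}

theorem exists_simulating_seq (sim : ∀ {a a' b}, S b a → r a a' → ∃ b', q b b' ∧ S b' a')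
    {u : ℕ → α} (hu : ∀ n, r (u n) (u (n + 1))) {b : β} (hb : S b (u 0)) :
    ∃ v : ℕ → β, v 0 = b ∧ (∀ n, q (v n) (v (n + 1))) ∧ ∀ n, S (v n) (u n) := by
  choose next hq hS using fun n (x : {x // S x (u n)}) => sim x.2 (hu n)
  let v (n : ℕ) : {x // S x (u n)} := Nat.rec ⟨b, hb⟩ (fun n x => ⟨next n x, hS n x⟩) n
  exact ⟨fun n => (v n).1, rfl, fun n => hq n (v n), fun n => (v n).2⟩

theorem exists_seq_of_reflTransGen (hr : ∀ a, r a a) {a b : α} (h : ReflTransGen r a b) :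
    ∃ (p : ℕ → α) (l : ℕ), 0 < l ∧ p 0 = a ∧ p l = b ∧ ∀ i, r (p i) (p (i + 1)) := by
  induction h using ReflTransGen.head_induction_on with
  | refl => exact ⟨fun _ => b, 1, one_pos, rfl, rfl, fun _ => hr b⟩
  | @head a c hac _ ih =>
    obtain ⟨p, l, -, rfl, hb, hp⟩ := ih
    refine ⟨fun | 0 => a | i + 1 => p i, l + 1, l.succ_pos, rfl, hb, ?_⟩
    rintro (_ | i)
    exacts [hac, hp i]

theorem existsUnique_le_lt_succ_of_strictMono {φ : ℕ → ℕ} (hφ : StrictMono φ) {k : ℕ}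
    (hk : φ 0 ≤ k) : ∃! n, φ n ≤ k ∧ k < φ (n + 1) := by
  have hk' : k ∈ ⋃ n, Set.Ico (φ n) (φ (n + 1)) :=
    (iUnion_Ico_map_succ_eq_Ici (fun n => hφ.monotone n.zero_le)
      hφ.not_bddAbove_range_of_isSuccArchimedean).ge hk
  obtain ⟨n, hn⟩ := Set.mem_iUnion.1 hk'
  refine ⟨n, hn, fun m hm => ?_⟩
  have hmn : m < n + 1 := hφ.lt_iff_lt.1 (hm.1.trans_lt hn.2)
  have hnm : n < m + 1 := hφ.lt_iff_lt.1 (hn.1.trans_lt hm.2)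
  lia

theorem exists_seq_strictMono_of_forall_reflTransGen (hr : ∀ a, r a a) {f : ℕ → α}
    (hf : ∀ n, ReflTransGen r (f n) (f (n + 1))) :
    ∃ (g : ℕ → α) (φ : ℕ → ℕ), g 0 = f 0 ∧ (∀ k, r (g k) (g (k + 1))) ∧ StrictMono φ ∧
      ∀ n, g (φ n) = f n := by
  choose p l hl hp₀ hp₁ hp using fun n => exists_seq_of_reflTransGen hr (hf n)
  let φ (n : ℕ) : ℕ := ∑ i ∈ Finset.range n, l i
  have φ_succ (n : ℕ) : φ (n + 1) = φ n + l n := Finset.sum_range_succ l n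
  have hφ : StrictMono φ := strictMono_nat_of_lt_succ fun n => by grind
  choose block hblock block_unique using fun k =>
    existsUnique_le_lt_succ_of_strictMono hφ (k := k) (Nat.zero_le k)
  let g (k : ℕ) : α := p (block k) (k - φ (block k))
  have g_of_lt {n i : ℕ} (hi : i < l n) : g (φ n + i) = p n i := by
    have : n = block (φ n + i) := block_unique _ _ (by grind)
    simp only [g, ← this, Nat.add_sub_cancel_left]
  have g_φ (n : ℕ) : g (φ n) = f n := (g_of_lt (hl n)).trans (hp₀ n)
  have g_of_le {n i : ℕ} (hi : i ≤ l n) : g (φ n + i) = p n i := by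
    rcases hi.lt_or_eq with hi | rfl
    · exact g_of_lt hi
    · rw [← φ_succ, g_φ, hp₁]
  refine ⟨g, φ, g_φ 0, fun k => ?_, hφ, g_φ⟩
  obtain ⟨i, hi⟩ := Nat.exists_eq_add_of_le (hblock k).1
  have hil : i < l (block k) := by grind
  rw [hi, add_assoc, g_of_le hil.le, g_of_le hil]
  exact hp _ i

end Sequences

namespace Term

open Relation

theorem liftAux_liftAux (M : Term) {i j : ℕ} (h : i ≤ j) :
    liftAux (j + 1) (liftAux i M) = liftAux i (liftAux j M) := by
  induction M generalizing i j <;> grind [liftAux]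

theorem liftAux_subst_of_ge (M N : Term) {c j : ℕ} (h : j ≤ c) :
    liftAux c (subst M j N) = subst (liftAux (c + 1) M) j (liftAux c N) := by
  induction M generalizing N c j <;> grind [liftAux, subst, liftAux_liftAux]

theorem liftAux_subst_of_le (M N : Term) {c j : ℕ} (h : c ≤ j) :
    liftAux c (subst M j N) = subst (liftAux c M) (j + 1) (liftAux c N) := by
  induction M generalizing N c j <;> grind [liftAux, subst, liftAux_liftAux]

theorem subst_liftAux (M N : Term) (i : ℕ) : subst (liftAux i M) i N = M := by
  induction M generalizing N i <;> grind [liftAux, subst]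

theorem subst_subst (M U V : Term) {i j : ℕ} (h : i ≤ j) :
    subst (subst M i U) j V = subst (subst M (j + 1) (liftAux i V)) i (subst U j V) := by
  induction M generalizing U V i j <;>
    grind [subst, subst_liftAux, liftAux_liftAux, liftAux_subst_of_le]

theorem IsValue.liftAux {V : Term} (hV : IsValue V) (c : ℕ) : IsValue (V.liftAux c) := by
  cases hV with
  | var n => grind [Term.liftAux, IsValue]
  | lam M => exact .lam _

theorem IsValue.subst {V W : Term} (hV : IsValue V) (hW : IsValue W) (j : ℕ) :
    IsValue (V.subst j W) := by
  cases hV with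
  | var n => grind [Term.subst, IsValue]
  | lam M => exact .lam _

theorem SurfBetaStep.betaStep {M N : Term} (h : SurfBetaStep M N) : BetaStep M N := by
  induction h with
  | beta hV => exact .beta hV
  | appL _ ih => exact .appL ih
  | appR _ ih => exact .appR ih

theorem SurfBetaStep.not_isValue {M N : Term} (h : SurfBetaStep M N) : ¬ IsValue M := by
  cases h <;> rintro ⟨⟩

theorem PlusStep.not_isValue {M A B : Term} (h : PlusStep M A B) : ¬ IsValue M := by
  cases h <;> rintro ⟨⟩

theorem SurfBetaStep.liftAux {M N : Term} (h : SurfBetaStep M N) (c : ℕ) :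
    SurfBetaStep (M.liftAux c) (N.liftAux c) := by
  induction h with
  | beta hV =>
    rw [liftAux_subst_of_ge _ _ c.zero_le]
    exact .beta (hV.liftAux c)
  | appL _ ih => exact .appL ih
  | appR _ ih => exact .appR ih

theorem SurfBetaStep.subst {M N V : Term} (h : SurfBetaStep M N) (hV : IsValue V) (j : ℕ) :
    SurfBetaStep (M.subst j V) (N.subst j V) := by
  induction h with
  | beta hU =>
    rw [subst_subst _ _ _ j.zero_le]
    exact .beta (hU.subst hV j)
  | appL _ ih => exact .appL ih
  | appR _ ih => exact .appR ih

theorem reflTransGen_surfBetaStep_liftAux {M N : Term} (h : ReflTransGen SurfBetaStep M N)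
    (c : ℕ) : ReflTransGen SurfBetaStep (M.liftAux c) (N.liftAux c) :=
  ReflTransGen.lift (Term.liftAux c) (fun _ _ h => h.liftAux c) _ _ h

theorem reflTransGen_surfBetaStep_subst {M N V : Term} (h : ReflTransGen SurfBetaStep M N)
    (hV : IsValue V) (j : ℕ) : ReflTransGen SurfBetaStep (M.subst j V) (N.subst j V) :=
  ReflTransGen.lift (Term.subst · j V) (fun _ _ h => h.subst hV j) _ _ h

/-- Deep reduction `M ⇒_d* N` in standardized form: `M` and `N` agree on their surface, and below
each abstraction or choice a sequence of surface `β_v`-steps is followed by deep reduction. This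
form of deep reduction, unlike a closure of deep steps, can be inverted along the syntax of `N`. -/
inductive Deep : Term → Term → Prop
  | var (n : ℕ) : Deep (var n) (var n)
  | lam {M M₁ M' : Term} : ReflTransGen SurfBetaStep M M₁ → Deep M₁ M' → Deep (lam M) (lam M')
  | app {M M' N N' : Term} : Deep M M' → Deep N N' → Deep (app M N) (app M' N')
  | choice {M M₁ M' N N₁ N' : Term} : ReflTransGen SurfBetaStep M M₁ → Deep M₁ M' →
      ReflTransGen SurfBetaStep N N₁ → Deep N₁ N' → Deep (choice M N) (choice M' N')

/-- Standard `β_v`-reduction `M ⇒ₛ* P ⇒_d* N`: surface steps first, then deep ones. -/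
def Standard : Term → Term → Prop := Comp (ReflTransGen SurfBetaStep) Deep

theorem Standard.appL {M M' N N' : Term} (hM : Standard M M') (hN : Deep N N') :
    Standard (app M N) (app M' N') :=
  let ⟨M₁, hs, hd⟩ := hM
  ⟨app M₁ N, ReflTransGen.lift (app · N) (fun _ _ => .appL) _ _ hs, .app hd hN⟩

theorem Standard.appR {M M' N N' : Term} (hM : Deep M M') (hN : Standard N N') :
    Standard (app M N) (app M' N') :=
  let ⟨N₁, hs, hd⟩ := hN
  ⟨app M N₁, ReflTransGen.lift (app M) (fun _ _ => .appR) _ _ hs, .app hM hd⟩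

namespace Deep

protected theorem refl (M : Term) : Deep M M := by
  induction M with
  | var n => exact .var n
  | lam M ih => exact .lam .refl ih
  | app M N ihM ihN => exact .app ihM ihN
  | choice M N ihM ihN => exact .choice .refl ihM .refl ihN

theorem standard {M N : Term} (h : Deep M N) : Standard M N :=
  ⟨M, .refl, h⟩

theorem isValue_iff {M N : Term} (h : Deep M N) : IsValue M ↔ IsValue N := by
  cases h <;> constructor <;> rintro ⟨⟩ <;> constructor

theorem reflTransGen_betaStep {M N : Term} (h : Deep M N) : ReflTransGen BetaStep M N := by
  have surf {M N : Term} : ReflTransGen SurfBetaStep M N → ReflTransGen BetaStep M N :=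
    ReflTransGen.mono (fun _ _ => SurfBetaStep.betaStep) M N
  have congr {f : Term → Term} (hf : ∀ {M N}, BetaStep M N → BetaStep (f M) (f N)) {M N : Term} :
      ReflTransGen BetaStep M N → ReflTransGen BetaStep (f M) (f N) :=
    ReflTransGen.lift f (fun _ _ => hf) M N
  induction h with
  | var n => exact .refl
  | lam hM _ ih => exact congr .lam ((surf hM).trans ih)
  | app _ _ ihM ihN => exact (congr .appL ihM).trans (congr .appR ihN)
  | choice hM _ hN _ ihM ihN =>
    exact (congr .chL ((surf hM).trans ihM)).trans (congr .chR ((surf hN).trans ihN))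

theorem liftAux {M N : Term} (h : Deep M N) (c : ℕ) : Deep (M.liftAux c) (N.liftAux c) := by
  induction h generalizing c with
  | var n => exact .refl _
  | lam hM _ ih => exact .lam (reflTransGen_surfBetaStep_liftAux hM _) (ih _)
  | app _ _ ihM ihN => exact .app (ihM c) (ihN c)
  | choice hM _ hN _ ihM ihN =>
    exact .choice (reflTransGen_surfBetaStep_liftAux hM c) (ihM c)
      (reflTransGen_surfBetaStep_liftAux hN c) (ihN c)

theorem subst {M N V W : Term} (h : Deep M N) (hV : IsValue V) (hVW : Deep V W) (j : ℕ) :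
    Deep (M.subst j V) (N.subst j W) := by
  induction h generalizing V W j with
  | var n =>
    simp only [Term.subst]
    split_ifs
    exacts [hVW, .var _, .var _]
  | lam hM _ ih =>
    exact .lam (reflTransGen_surfBetaStep_subst hM (hV.liftAux 0) _)
      (ih (hV.liftAux 0) (hVW.liftAux 0) _)
  | app _ _ ihM ihN => exact .app (ihM hV hVW j) (ihN hV hVW j)
  | choice hM _ hN _ ihM ihN =>
    exact .choice (reflTransGen_surfBetaStep_subst hM hV j) (ihM hV hVW j)
      (reflTransGen_surfBetaStep_subst hN hV j) (ihN hV hVW j)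

theorem standard_of_betaStep {M N N' : Term} (h : Deep M N) (hN : BetaStep N N') :
    Standard M N' := by
  induction hN generalizing M with
  | beta hV =>
    cases h with | @app _ _ W _ hP hW =>
    cases hP with | @lam P P₁ _ hP hP₁ =>
    have hWV : IsValue W := hW.isValue_iff.2 hV
    -- Contracting the surface redex brings the body of the abstraction to the surface, so the
    -- surface steps performed inside it become surface steps of the whole term.
    exact ⟨P₁.subst 0 W, (reflTransGen_surfBetaStep_subst hP hWV 0).head (.beta hWV),
      hP₁.subst hWV hW 0⟩
  | appL _ ih => cases h with
    | app hM hN => exact .appL (ih hM) hN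
  | appR _ ih => cases h with
    | app hM hN => exact .appR hM (ih hN)
  | lam _ ih => cases h with
    | lam hM hM₁ =>
      obtain ⟨P, hs, hd⟩ := ih hM₁
      exact (Deep.lam (hM.trans hs) hd).standard
  | chL _ ih => cases h with
    | choice hM hM₁ hN hN₁ =>
      obtain ⟨P, hs, hd⟩ := ih hM₁
      exact (Deep.choice (hM.trans hs) hd hN hN₁).standard
  | chR _ ih => cases h with
    | choice hM hM₁ hN hN₁ =>
      obtain ⟨P, hs, hd⟩ := ih hN₁
      exact (Deep.choice hM hM₁ (hN.trans hs) hd).standard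

theorem exists_plusStep {M N A B : Term} (h : Deep M N) (hN : PlusStep N A B) :
    ∃ A' B', PlusStep M A' B' ∧ Standard A' A ∧ Standard B' B := by
  induction hN generalizing M with
  | choice => cases h with
    | choice hM hM₁ hN hN₁ => exact ⟨_, _, .choice, ⟨_, hM, hM₁⟩, ⟨_, hN, hN₁⟩⟩
  | appL _ ih => cases h with
    | app hM hN =>
      obtain ⟨A', B', hp, hA, hB⟩ := ih hM
      exact ⟨_, _, .appL hp, .appL hA hN, .appL hB hN⟩
  | appR _ ih => cases h with
    | app hM hN =>
      obtain ⟨A', B', hp, hA, hB⟩ := ih hN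
      exact ⟨_, _, .appR hp, .appR hM hA, .appR hM hB⟩

theorem mem_vClass_iff {M N : Term} (h : Deep M N) (V : Term) : M ∈ VClass V ↔ N ∈ VClass V := by
  have hMN : BetaEq M N := EqvGen.reflTransGen_le_eqvGen _ _ _ h.reflTransGen_betaStep
  exact and_congr h.isValue_iff ⟨(.trans _ _ _ (.symm _ _ hMN) ·), (.trans _ _ _ hMN ·)⟩

end Deep

end Term

namespace MDist

variable {X Y : Type}

@[simp] theorem scale_add (p : ℝ≥0) (m n : MDist X) : scale p (m + n) = scale p m + scale p n :=
  Multiset.map_add _ m n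

@[simp] theorem scale_cons (p q : ℝ≥0) (M : X) (m : MDist X) :
    scale p ((q, M) ::ₘ m) = (p * q, M) ::ₘ scale p m :=
  Multiset.map_cons _ _ m

theorem scale_single (p : ℝ≥0) (M : X) : scale p (single M) = {(p, M)} := by
  simp [scale, single]

theorem scale_scale (p q : ℝ≥0) (m : MDist X) : scale p (scale q m) = scale (p * q) m := by
  simp [scale, mul_assoc]

theorem pair_eq_scale_add_scale (p q : ℝ≥0) (M N : X) :
    ({(p, M), (q, N)} : MDist X) = scale p (single M) + scale q (single N) := by
  simp only [scale_single]
  rfl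

@[simp] theorem mass_cons (q : ℝ≥0 × X) (m : MDist X) (A : Set X) :
    mass (q ::ₘ m) A = A.indicator (fun _ => (q.1 : ℝ≥0∞)) q.2 + mass m A := by
  simp [mass]

@[simp] theorem mass_add (m n : MDist X) (A : Set X) : mass (m + n) A = mass m A + mass n A := by
  simp [mass]

theorem mass_scale_single (p : ℝ≥0) (M : X) (A : Set X) :
    mass (scale p (single M)) A = A.indicator (fun _ => (p : ℝ≥0∞)) M := by
  simp [mass, scale_single]

/-- The lifting of a relation between elements to multidistributions: the entries are matched
bijectively, with equal weights and related elements. It expresses `𝔪 ⇒_d* 𝔫` as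
`𝔪.Rel Term.Deep 𝔫`. -/
protected def Rel (S : X → Y → Prop) : MDist X → MDist Y → Prop :=
  Multiset.Rel fun a b => a.1 = b.1 ∧ S a.2 b.2

namespace Rel

variable {S : X → Y → Prop}

protected theorem refl {S : X → X → Prop} (hS : ∀ M, S M M) (m : MDist X) : m.Rel S m :=
  Multiset.rel_refl_of_refl_on fun _ _ => ⟨rfl, hS _⟩

theorem single {M : X} {N : Y} (h : S M N) : (single M).Rel S (single N) :=
  .cons ⟨rfl, h⟩ .zero

theorem add {m m' : MDist X} {n n' : MDist Y} (h : m.Rel S n) (h' : m'.Rel S n') :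
    (m + m').Rel S (n + n') :=
  Multiset.Rel.add h h'

theorem scale {m : MDist X} {n : MDist Y} (p : ℝ≥0) (h : m.Rel S n) :
    (scale p m).Rel S (scale p n) :=
  Multiset.rel_map.2 <| h.mono fun _ _ _ _ hab => ⟨congrArg (p * ·) hab.1, hab.2⟩

theorem mass_eq {m : MDist X} {n : MDist Y} (h : m.Rel S n) {A : Set X} {B : Set Y}
    (hAB : ∀ {M N}, S M N → (M ∈ A ↔ N ∈ B)) : mass m A = mass n B := by
  classical
  induction h with
  | zero => rfl
  | cons hab _ ih => simp only [mass_cons, Set.indicator_apply, hab.1, hAB hab.2, ih]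

end Rel

end MDist

namespace Lift

open MDist Relation

variable {X : Type} {r s : X → MDist X → Prop}

protected theorem refl (m : MDist X) : Lift r m m := by
  induction m using Multiset.induction with
  | empty => exact .nil
  | cons a m ih => simpa [scale_single] using Lift.cons (p := a.1) (M := a.2) (.inl rfl) ih

theorem mono (hrs : ∀ {M m}, r M m → s M m) {m n : MDist X} (h : Lift r m n) : Lift s m n := by
  induction h with
  | nil => exact .nil
  | cons hM _ ih => exact .cons (hM.imp_right hrs) ih

theorem single {M : X} {m : MDist X} (h : r M m) : Lift r (single M) m := by
  simpa [MDist.scale, MDist.single] using Lift.cons (p := 1) (.inr h) .nil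

theorem add {m m' n n' : MDist X} (h : Lift r m n) (h' : Lift r m' n') :
    Lift r (m + m') (n + n') := by
  induction h with
  | nil => simpa using h'
  | cons hM _ ih =>
    rw [Multiset.cons_add, add_assoc]
    exact .cons hM ih

theorem scale {m n : MDist X} (p : ℝ≥0) (h : Lift r m n) : Lift r (scale p m) (scale p n) := by
  induction h with
  | nil => exact .nil
  | cons hM _ ih =>
    rw [scale_cons, scale_add, scale_scale]
    exact .cons hM ih

theorem reflTransGen_add {m m' n n' : MDist X} (h : ReflTransGen (Lift r) m n)
    (h' : ReflTransGen (Lift r) m' n') : ReflTransGen (Lift r) (m + m') (n + n') :=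
  (ReflTransGen.lift (· + m') (fun _ _ h => h.add (.refl m')) _ _ h).trans
    (ReflTransGen.lift (n + ·) (fun _ _ h => (Lift.refl n).add h) _ _ h')

theorem reflTransGen_scale {m n : MDist X} (p : ℝ≥0) (h : ReflTransGen (Lift r) m n) :
    ReflTransGen (Lift r) (MDist.scale p m) (MDist.scale p n) :=
  ReflTransGen.lift (MDist.scale p) (fun _ _ h => h.scale p) _ _ h

theorem mass_le {m n : MDist X} (h : Lift r m n) {A : Set X}
    (hA : ∀ {M m}, r M m → M ∉ A) : mass m A ≤ mass n A := by
  induction h with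
  | nil => exact le_rfl
  | @cons p M m s t hM _ ih =>
    rw [mass_cons, mass_add]
    refine add_le_add ?_ ih
    rcases hM with rfl | hM
    · rw [mass_scale_single]
    · rw [Set.indicator_of_notMem (hA hM)]
      exact zero_le

end Lift

section Standardization

open MDist Relation

theorem surfRed.red {M : Term} {m : MDist Term} : surfRed M m → red M m :=
  Or.imp_left fun ⟨N, hN, hm⟩ => ⟨N, hN.betaStep, hm⟩

theorem surfRed.not_mem_vClass {M V : Term} {m : MDist Term} (h : surfRed M m) : M ∉ VClass V := by
  rintro ⟨hM, -⟩
  rcases h with ⟨N, hN, -⟩ | ⟨A, B, hp, -⟩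
  exacts [hN.not_isValue hM, hp.not_isValue hM]

theorem Term.Standard.exists_surfRed {M N : Term} (h : Standard M N) :
    ∃ x, ReflTransGen (Lift surfRed) (single M) x ∧ x.Rel Deep (single N) := by
  obtain ⟨P, hs, hd⟩ := h
  have hstep (A B : Term) (hAB : SurfBetaStep A B) : Lift surfRed (single A) (single B) :=
    .single (.inl ⟨B, hAB, rfl⟩)
  exact ⟨single P, ReflTransGen.lift single hstep _ _ hs, .single hd⟩

theorem Term.Deep.exists_surfRed {M N : Term} {n : MDist Term} (h : Deep M N)
    (hn : LiftTerm red N n) :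
    ∃ x, ReflTransGen (Lift surfRed) (single M) x ∧ x.Rel Deep n := by
  rcases hn with rfl | ⟨N', hN', rfl⟩ | ⟨A, B, hp, rfl⟩
  · exact h.standard.exists_surfRed
  · exact (h.standard_of_betaStep hN').exists_surfRed
  · obtain ⟨A', B', hp', hA, hB⟩ := h.exists_plusStep hp
    obtain ⟨x, hx, hxA⟩ := hA.exists_surfRed
    obtain ⟨y, hy, hyB⟩ := hB.exists_surfRed
    have hplus : Lift surfRed (single M) {(1 / 2, A'), (1 / 2, B')} :=
      .single (.inr ⟨A', B', hp', rfl⟩)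
    rw [pair_eq_scale_add_scale] at hplus ⊢
    exact ⟨scale (1 / 2) x + scale (1 / 2) y,
      .head hplus (Lift.reflTransGen_add (Lift.reflTransGen_scale _ hx)
        (Lift.reflTransGen_scale _ hy)),
      (hxA.scale _).add (hyB.scale _)⟩

theorem surface_standardization {m n x : MDist Term} (hx : x.Rel Deep m) (h : Lift red m n) :
    ∃ y, ReflTransGen (Lift surfRed) x y ∧ y.Rel Deep n := by
  induction h generalizing x with
  | nil => exact ⟨x, .refl, hx⟩
  | cons hN _ ih =>
    obtain ⟨⟨p, M⟩, x', ⟨rfl, hMN⟩, hx', rfl⟩ := Multiset.rel_cons_right.1 hx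
    obtain ⟨y, hy, hyn⟩ := hMN.exists_surfRed hN
    obtain ⟨z, hz, hzt⟩ := ih hx'
    refine ⟨scale p y + z, ?_, (hyn.scale p).add hzt⟩
    rw [← Multiset.singleton_add, ← scale_single]
    exact Lift.reflTransGen_add (Lift.reflTransGen_scale p hy) hz

theorem convergesV_congr_of_rel_deep {ms ns : ℕ → MDist Term} (h : ∀ n, (ms n).Rel Deep (ns n))
    (ρ : Term → ℝ≥0∞) : ConvergesV ms ρ ↔ ConvergesV ns ρ := by
  simp only [ConvergesV, fun n V => (h n).mass_eq (fun hMN => hMN.mem_vClass_iff V)]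

theorem convergesV_comp_iff {ms : ℕ → MDist Term}
    (hms : ∀ n, Lift surfRed (ms n) (ms (n + 1))) {φ : ℕ → ℕ} (hφ : StrictMono φ)
    (ρ : Term → ℝ≥0∞) : ConvergesV (ms ∘ φ) ρ ↔ ConvergesV ms ρ := by
  have hmono (V : Term) : Monotone fun n => mass (ms n) (VClass V) :=
    monotone_nat_of_le_succ fun n => (hms n).mass_le surfRed.not_mem_vClass
  simp only [ConvergesV, Function.comp_apply, (hmono _).iSup_comp_tendsto_atTop hφ.tendsto_atTop]

end Standardization

/-- Asymptotic completeness of surface reduction for `Λ⊕^cbv` with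
observations `𝒱_∼`: a limit distribution is reachable by some reduction
sequence iff it is reachable by a surface reduction sequence. -/
theorem asymptotic_completeness_surface (m : MDist Term) (ρ : Term → ℝ≥0∞) :
    (∃ ms : ℕ → MDist Term, ms 0 = m ∧ (∀ n, Lift red (ms n) (ms (n + 1))) ∧
      ConvergesV ms ρ) ↔
    (∃ ms : ℕ → MDist Term, ms 0 = m ∧ (∀ n, Lift surfRed (ms n) (ms (n + 1))) ∧
      ConvergesV ms ρ) := by
  constructor
  · rintro ⟨ms, rfl, hms, hρ⟩
    obtain ⟨rs, hrs₀, hrs, hdeep⟩ :=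
      exists_simulating_seq surface_standardization hms (MDist.Rel.refl Deep.refl _)
    obtain ⟨ss, φ, hss₀, hss, hφ, hφrs⟩ :=
      exists_seq_strictMono_of_forall_reflTransGen Lift.refl hrs
    refine ⟨ss, hss₀.trans hrs₀, hss, (convergesV_comp_iff hss hφ ρ).1 ?_⟩
    rw [show ss ∘ φ = rs from funext hφrs]
    exact (convergesV_congr_of_rel_deep hdeep ρ).2 hρ
  · rintro ⟨ms, hms₀, hms, hρ⟩
    exact ⟨ms, hms₀, fun n => (hms n).mono surfRed.red, hρ⟩
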